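/- arXiv:0704.0329 — 2 statements merged into one kernel-verified Lean document; each statement's English description precedes it below -/
import Mathlib

section
/- Let α > 0 and γ > 0 be real, let a ∈ ℂ, and let s > 0 be real with s^α > |a|. Then ∫₀^∞ e^{−st} t^{γ−1} E_{α,γ}(−a t^α) dt = s^{α−γ} / (s^α + a). Equivalently, writing γ = α − β + 1 with α − β + 1 > 0, the Laplace transform of t^{α−β} E_{α,α−β+1}(−a t^α) is s^{β−1} / (s^α + a). -/
open scoped Real
open MeasureTheory

/-- Generalized Mittag-Leffler function `E_{α,γ}(z) = ∑ zⁿ / Γ(αn + γ)`. -/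
noncomputable def mittagLeffler (α γ : ℝ) (z : ℂ) : ℂ :=
  ∑' n : ℕ, z ^ n / (Real.Gamma (α * n + γ) : ℂ)

/-- Laplace transform of `t^{γ-1} E_{α,γ}(-a t^α)`:
`∫₀^∞ e^{-st} t^{γ-1} E_{α,γ}(-a t^α) dt = s^{α-γ} / (s^α + a)`
for real `α, γ > 0`, `a ∈ ℂ`, and real `s > 0` with `s^α > |a|`. -/
theorem laplace_mittagLeffler (α γ : ℝ) (hα : 0 < α) (hγ : 0 < γ) (a : ℂ)
    (s : ℝ) (hs : 0 < s) (hsa : ‖a‖ < s ^ α) :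
    ∫ t in Set.Ioi (0 : ℝ), Complex.exp (-(s * t : ℝ)) * ((t ^ (γ - 1) : ℝ) : ℂ) *
        mittagLeffler α γ (-a * ((t ^ α : ℝ) : ℂ)) =
      ((s ^ (α - γ) : ℝ) : ℂ) / (((s ^ α : ℝ) : ℂ) + a) := by
  have hpos : ∀ n : ℕ, 0 < α * n + γ := fun n => by positivity
  have hG : ∀ n : ℕ, 0 < Real.Gamma (α * n + γ) := fun n => Real.Gamma_pos_of_pos (hpos n)
  have hsα : 0 < s ^ α := Real.rpow_pos_of_pos hs α
  let c : ℕ → ℂ := fun n => (-a) ^ n / (Real.Gamma (α * n + γ) : ℂ)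
  let g : ℕ → ℝ → ℝ := fun n t => t ^ (α * n + γ - 1) * Real.exp (-(s * t))
  let F : ℕ → ℝ → ℂ := fun n t => c n * ((g n t : ℝ) : ℂ)
  have hgint : ∀ n, Integrable (g n) (volume.restrict (Set.Ioi 0)) := by
    intro n
    have h := integrableOn_rpow_mul_exp_neg_mul_rpow (p := 1) (s := α * n + γ - 1) (b := s)
      (by linarith [hpos n]) one_pos hs
    simpa [g, IntegrableOn] using h
  have hgval : ∀ n, ∫ t in Set.Ioi (0 : ℝ), g n t
      = (1 / s) ^ (α * n + γ) * Real.Gamma (α * n + γ) := fun n =>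
    Real.integral_rpow_mul_exp_neg_mul_Ioi (hpos n) hs
  have hpow : ∀ n : ℕ, (1 / s) ^ (α * n + γ) = s ^ (-γ) * ((s ^ α)⁻¹) ^ n := by
    intro n
    rw [one_div, Real.inv_rpow hs.le, Real.rpow_add hs, Real.rpow_mul hs.le, Real.rpow_natCast,
      Real.rpow_neg hs.le, inv_pow, mul_inv, mul_comm]
  have hFint : ∀ n, Integrable (F n) (volume.restrict (Set.Ioi 0)) := fun n =>
    (hgint n).ofReal.const_mul (c n)
  have hnorm : ∀ n, ∫ t in Set.Ioi (0 : ℝ), ‖F n t‖ = s ^ (-γ) * (‖a‖ / s ^ α) ^ n := by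
    intro n
    have h1 : ∫ t in Set.Ioi (0 : ℝ), ‖F n t‖ = ∫ t in Set.Ioi (0 : ℝ), ‖c n‖ * g n t := by
      refine setIntegral_congr_fun measurableSet_Ioi fun t ht => ?_
      have ht' : (0 : ℝ) < t := ht
      have : 0 ≤ g n t := by simp only [g]; positivity
      simp only [F, norm_mul, Complex.norm_real, Real.norm_of_nonneg this]
    rw [h1, integral_const_mul, hgval, hpow]
    have := (hG n).ne'
    simp only [c, norm_div, norm_pow, norm_neg, Complex.norm_real, Real.norm_of_nonneg (hG n).le]
    rw [div_pow, inv_pow]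
    field_simp
  have hsum : Summable fun n => ∫ t in Set.Ioi (0 : ℝ), ‖F n t‖ := by
    simp only [hnorm]
    exact (summable_geometric_of_lt_one (by positivity) ((div_lt_one hsα).2 hsa)).mul_left _
  have key := integral_tsum_of_summable_integral_norm hFint hsum
  have hFval : ∀ n, ∫ t in Set.Ioi (0 : ℝ), F n t
      = ((s ^ (-γ) : ℝ) : ℂ) * (-a / ((s ^ α : ℝ) : ℂ)) ^ n := by
    intro n
    simp only [F]
    rw [integral_const_mul, integral_complex_ofReal, hgval, hpow]
    have : (Real.Gamma (α * n + γ) : ℂ) ≠ 0 := by exact_mod_cast (hG n).ne'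
    simp only [c, Complex.ofReal_mul, Complex.ofReal_pow, Complex.ofReal_inv]
    rw [div_pow, inv_pow]
    field_simp
  have hL : ∫ t in Set.Ioi (0 : ℝ), Complex.exp (-(s * t : ℝ)) * ((t ^ (γ - 1) : ℝ) : ℂ) *
        mittagLeffler α γ (-a * ((t ^ α : ℝ) : ℂ)) = ∫ t in Set.Ioi (0 : ℝ), ∑' n, F n t := by
    refine setIntegral_congr_fun measurableSet_Ioi fun t ht => ?_
    have ht' : (0 : ℝ) < t := ht
    simp only [mittagLeffler]
    rw [← tsum_mul_left]
    refine tsum_congr fun n => ?_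
    have e : t ^ (α * n + γ - 1) = (t ^ α) ^ n * t ^ (γ - 1) := by
      rw [add_sub_assoc, Real.rpow_add ht', Real.rpow_mul ht'.le, Real.rpow_natCast]
    simp only [F, c, g, e, Complex.ofReal_mul, Complex.ofReal_pow, Complex.ofReal_exp,
      Complex.ofReal_neg]
    ring
  have hsC : ((s ^ α : ℝ) : ℂ) ≠ 0 := by exact_mod_cast hsα.ne'
  have hr : ‖-a / ((s ^ α : ℝ) : ℂ)‖ < 1 := by
    rw [norm_div, norm_neg, Complex.norm_real, Real.norm_of_nonneg hsα.le]
    exact (div_lt_one hsα).2 hsa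
  rw [hL, ← key]
  simp only [hFval]
  rw [tsum_mul_left, tsum_geometric_of_norm_lt_one hr]
  have hd : 1 - -a / ((s ^ α : ℝ) : ℂ) = (((s ^ α : ℝ) : ℂ) + a) / ((s ^ α : ℝ) : ℂ) := by
    field_simp
    ring
  rw [hd, inv_div, sub_eq_add_neg, Real.rpow_add hs, Complex.ofReal_mul]
  ring
end

section
/- Let β ∈ (0,2], λ, c₁, c₂ ∈ ℂ, and let φ : [0,∞) → ℂ be continuous with |φ(t)| ≤ M e^{σt} for some constants M, σ. Define u(t) = c₁ E_{β,1}(−λ t^β) + c₂ t E_{β,2}(−λ t^β) + ∫₀^t φ(t−ξ) ξ^{β−1} E_{β,β}(−λ ξ^β) dξ. Then for every real s > max(σ, 0) with s^β > |λ|, the Laplace transform of u satisfies ∫₀^∞ e^{−st} u(t) dt = (c₁ s^{β−1} + c₂ s^{β−2} + Φ̃(s)) / (s^β + λ), where Φ̃(s) = ∫₀^∞ e^{−st} φ(t) dt. -/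
open scoped Real
open MeasureTheory

open Set in
lemma ml_laplace (β γ : ℝ) (hβ : 0 < β) (hγ : 0 < γ) (lam : ℂ) (s : ℝ) (hs : 0 < s)
    (hsl : ‖lam‖ < s ^ β) :
    IntegrableOn (fun t : ℝ => Complex.exp (-(s * t : ℝ)) * (((t ^ (γ - 1) : ℝ) : ℂ) *
      mittagLeffler β γ (-lam * ((t ^ β : ℝ) : ℂ)))) (Ioi 0) ∧
    ∫ t in Ioi (0 : ℝ), Complex.exp (-(s * t : ℝ)) * (((t ^ (γ - 1) : ℝ) : ℂ) *
      mittagLeffler β γ (-lam * ((t ^ β : ℝ) : ℂ))) =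
      ((s ^ (β - γ) : ℝ) : ℂ) / (((s ^ β : ℝ) : ℂ) + lam) := by
  have hsb : 0 < s ^ β := Real.rpow_pos_of_pos hs _
  have hp : ∀ n : ℕ, 0 < β * n + γ := fun n => by positivity
  have hG : ∀ n : ℕ, 0 < Real.Gamma (β * n + γ) := fun n => Real.Gamma_pos_of_pos (hp n)
  have hne : ((s ^ β : ℝ) : ℂ) + lam ≠ 0 := by
    intro h
    have h1 : lam = -((s ^ β : ℝ) : ℂ) := by linear_combination h
    rw [h1, norm_neg, Complex.norm_real, Real.norm_of_nonneg hsb.le] at hsl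
    exact lt_irrefl _ hsl
  -- the terms
  let R : ℕ → ℝ → ℝ := fun n t => t ^ (β * n + γ - 1) * Real.exp (-(s * t))
  let C : ℕ → ℂ := fun n => (-lam) ^ n / (Real.Gamma (β * n + γ) : ℂ)
  have hRint : ∀ n, ∫ t in Ioi (0 : ℝ), R n t =
      (1 / s) ^ (β * n + γ) * Real.Gamma (β * n + γ) := fun n =>
    Real.integral_rpow_mul_exp_neg_mul_Ioi (hp n) hs
  have hRi : ∀ n, IntegrableOn (R n) (Ioi 0) := fun n => by
    apply not_imp_comm.1 integral_undef
    rw [hRint n]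
    have := hG n
    positivity
  have hpow : ∀ n : ℕ, (1 / s) ^ (β * n + γ) = s ^ (-γ) * ((s ^ β)⁻¹) ^ n := fun n => by
    rw [one_div, Real.inv_rpow hs.le, Real.rpow_add hs, Real.rpow_mul hs.le, Real.rpow_natCast,
      mul_inv, Real.rpow_neg hs.le, inv_pow, mul_comm]
  have hFi : ∀ n, IntegrableOn (fun t => C n * (R n t : ℂ)) (Ioi 0) := fun n =>
    ((hRi n).ofReal).const_mul (C n)
  have hFint : ∀ n, ∫ t in Ioi (0 : ℝ), C n * (R n t : ℂ) =
      ((s ^ (-γ) : ℝ) : ℂ) * (-lam / ((s ^ β : ℝ) : ℂ)) ^ n := fun n => by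
    have hg : ((Real.Gamma (β * n + γ) : ℝ) : ℂ) ≠ 0 := by exact_mod_cast (hG n).ne'
    rw [integral_const_mul, integral_complex_ofReal, hRint n, hpow n]
    simp only [C]
    rw [div_pow, inv_pow]
    push_cast
    field_simp
  have hFnorm : ∀ n, ∫ t in Ioi (0 : ℝ), ‖C n * (R n t : ℂ)‖ =
      s ^ (-γ) * (‖lam‖ / s ^ β) ^ n := fun n => by
    have h1 : ∫ t in Ioi (0 : ℝ), ‖C n * (R n t : ℂ)‖ = ∫ t in Ioi (0 : ℝ), ‖C n‖ * R n t := by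
      refine setIntegral_congr_fun measurableSet_Ioi fun t ht => ?_
      have ht' : 0 < t := ht
      have : 0 ≤ R n t := by simp only [R]; positivity
      simp only [norm_mul, Complex.norm_real, Real.norm_of_nonneg this]
    have hg := (hG n).ne'
    rw [h1, integral_const_mul, hRint n, hpow n]
    simp only [C, norm_div, norm_pow, norm_neg, Complex.norm_real, Real.norm_of_nonneg (hG n).le]
    rw [div_pow, inv_pow]
    field_simp
  have hsum := hasSum_integral_of_summable_integral_norm (μ := volume.restrict (Ioi (0 : ℝ)))
    (F := fun n t => C n * (R n t : ℂ)) hFi (by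
      simp only [hFnorm]
      exact (summable_geometric_of_lt_one (by positivity)
        ((div_lt_one hsb).2 hsl)).mul_left _)
  have hcongr : ∫ t in Ioi (0 : ℝ), Complex.exp (-(s * t : ℝ)) * (((t ^ (γ - 1) : ℝ) : ℂ) *
      mittagLeffler β γ (-lam * ((t ^ β : ℝ) : ℂ))) =
      ∫ t in Ioi (0 : ℝ), ∑' n, C n * (R n t : ℂ) := by
    refine setIntegral_congr_fun measurableSet_Ioi fun t ht => ?_
    have ht' : 0 < t := ht
    simp only [mittagLeffler]
    rw [← tsum_mul_left, ← tsum_mul_left]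
    refine tsum_congr fun n => ?_
    simp only [C, R]
    have : t ^ (β * n + γ - 1) = t ^ (γ - 1) * (t ^ β) ^ n := by
      rw [← Real.rpow_natCast, ← Real.rpow_mul ht'.le, ← Real.rpow_add ht']
      ring_nf
    rw [this, mul_pow]
    push_cast
    ring
  have hval : ∫ t in Ioi (0 : ℝ), Complex.exp (-(s * t : ℝ)) * (((t ^ (γ - 1) : ℝ) : ℂ) *
      mittagLeffler β γ (-lam * ((t ^ β : ℝ) : ℂ))) =
      ((s ^ (β - γ) : ℝ) : ℂ) / (((s ^ β : ℝ) : ℂ) + lam) := by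
    rw [hcongr]
    simp only [hFint] at hsum
    have hlt : ‖-lam / ((s ^ β : ℝ) : ℂ)‖ < 1 := by
      rw [norm_div, norm_neg, Complex.norm_real, Real.norm_of_nonneg hsb.le]
      exact (div_lt_one hsb).2 hsl
    have h2 := (hasSum_geometric_of_norm_lt_one hlt).mul_left ((s ^ (-γ) : ℝ) : ℂ)
    rw [hsum.unique h2]
    have h3 : s ^ (β - γ) = s ^ (-γ) * s ^ β := by
      rw [← Real.rpow_add hs]; ring_nf
    have h4 : ((s ^ β : ℝ) : ℂ) ≠ 0 := by exact_mod_cast hsb.ne'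
    have h5 : 1 - -lam / ((s ^ β : ℝ) : ℂ) = (((s ^ β : ℝ) : ℂ) + lam) / ((s ^ β : ℝ) : ℂ) := by
      field_simp
      ring
    rw [h3, h5, inv_div, Complex.ofReal_mul, mul_div_assoc]
  refine ⟨?_, hval⟩
  apply not_imp_comm.1 integral_undef
  rw [hval]
  refine div_ne_zero ?_ hne
  exact_mod_cast (Real.rpow_pos_of_pos hs _).ne'

/-- Transform-space content of the solution formula for the unified fractional
reaction-diffusion equation at a fixed Fourier mode: for `β ∈ (0,2]`, the Laplace
transform of
`u(t) = c₁ E_{β,1}(-λ t^β) + c₂ t E_{β,2}(-λ t^β) + ∫₀^t φ(t-ξ) ξ^{β-1} E_{β,β}(-λ ξ^β) dξ`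
is `(c₁ s^{β-1} + c₂ s^{β-2} + Φ̃(s)) / (s^β + λ)` for `s > max(σ, 0)`, `s^β > |λ|`. -/
theorem laplace_solution_fixed_mode (β : ℝ) (hβ : β ∈ Set.Ioc (0 : ℝ) 2)
    (lam c₁ c₂ : ℂ) (φ : ℝ → ℂ) (M σ : ℝ)
    (hφcont : ContinuousOn φ (Set.Ici 0))
    (hφbound : ∀ t ≥ (0 : ℝ), ‖φ t‖ ≤ M * Real.exp (σ * t))
    (u : ℝ → ℂ)
    (hu : ∀ t : ℝ, u t =
      c₁ * mittagLeffler β 1 (-lam * ((t ^ β : ℝ) : ℂ)) +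
      c₂ * (t : ℂ) * mittagLeffler β 2 (-lam * ((t ^ β : ℝ) : ℂ)) +
      ∫ ξ in (0 : ℝ)..t, φ (t - ξ) * ((ξ ^ (β - 1) : ℝ) : ℂ) *
        mittagLeffler β β (-lam * ((ξ ^ β : ℝ) : ℂ)))
    (s : ℝ) (hs : max σ 0 < s) (hsl : ‖lam‖ < s ^ β) :
    ∫ t in Set.Ioi (0 : ℝ), Complex.exp (-(s * t : ℝ)) * u t =
      (c₁ * ((s ^ (β - 1) : ℝ) : ℂ) + c₂ * ((s ^ (β - 2) : ℝ) : ℂ) +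
          ∫ t in Set.Ioi (0 : ℝ), Complex.exp (-(s * t : ℝ)) * φ t) /
        (((s ^ β : ℝ) : ℂ) + lam) := by
  have hβ0 : 0 < β := hβ.1
  have hs0 : 0 < s := lt_of_le_of_lt (le_max_right _ _) hs
  have hsσ : σ < s := lt_of_le_of_lt (le_max_left _ _) hs
  obtain ⟨i1, v1⟩ := ml_laplace β 1 hβ0 one_pos lam s hs0 hsl
  obtain ⟨i2, v2⟩ := ml_laplace β 2 hβ0 two_pos lam s hs0 hsl
  obtain ⟨i3, v3⟩ := ml_laplace β β hβ0 hβ0 lam s hs0 hsl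
  have hφi : IntegrableOn (fun t : ℝ => Complex.exp (-(s * t : ℝ)) * φ t) (Set.Ioi 0) := by
    have hb : IntegrableOn (fun t : ℝ => M * Real.exp (-(s - σ) * t)) (Set.Ioi 0) :=
      (integrableOn_exp_mul_Ioi (a := -(s - σ)) (by linarith) 0).const_mul M
    refine Integrable.mono' hb ?_ ?_
    · refine ContinuousOn.aestronglyMeasurable ?_ measurableSet_Ioi
      refine ContinuousOn.mul (by fun_prop) (hφcont.mono Set.Ioi_subset_Ici_self)
    · refine (ae_restrict_iff' measurableSet_Ioi).2 (Filter.Eventually.of_forall fun t ht => ?_)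
      have ht' : 0 < t := ht
      have h1 : ‖Complex.exp (-(s * t : ℝ))‖ = Real.exp (-(s * t)) := by
        rw [← Complex.ofReal_neg, Complex.norm_exp_ofReal]
      rw [norm_mul, h1]
      calc Real.exp (-(s * t)) * ‖φ t‖ ≤ Real.exp (-(s * t)) * (M * Real.exp (σ * t)) := by
            gcongr
            exact hφbound t ht'.le
        _ = M * Real.exp (-(s - σ) * t) := by
            rw [mul_left_comm, ← Real.exp_add]; ring_nf
  have ic := integrable_posConvolution (μ := volume) (ν := volume) i3 hφi
    (ContinuousLinearMap.mul ℝ ℂ)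
  have vc := integral_posConvolution (μ := volume) (ν := volume) i3 hφi
    (ContinuousLinearMap.mul ℝ ℂ)
  rw [v3] at vc
  have ic' := ic.integrableOn (s := Set.Ioi 0)
  have hpc : ∫ t in Set.Ioi (0 : ℝ), posConvolution
      (fun t : ℝ => Complex.exp (-(s * t : ℝ)) * (((t ^ (β - 1) : ℝ) : ℂ) *
      mittagLeffler β β (-lam * ((t ^ β : ℝ) : ℂ))))
      (fun t : ℝ => Complex.exp (-(s * t : ℝ)) * φ t) (ContinuousLinearMap.mul ℝ ℂ) volume t =
      _ := (setIntegral_congr_fun measurableSet_Ioi fun t ht => by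
        simp only [posConvolution, Set.indicator_of_mem ht]).trans vc
  have key : ∫ t in Set.Ioi (0 : ℝ), Complex.exp (-(s * t : ℝ)) * u t =
      ∫ t in Set.Ioi (0 : ℝ), ((c₁ * (Complex.exp (-(s * t : ℝ)) * (((t ^ ((1:ℝ) - 1) : ℝ) : ℂ) *
      mittagLeffler β 1 (-lam * ((t ^ β : ℝ) : ℂ)))) +
      c₂ * (Complex.exp (-(s * t : ℝ)) * (((t ^ ((2:ℝ) - 1) : ℝ) : ℂ) *
      mittagLeffler β 2 (-lam * ((t ^ β : ℝ) : ℂ))))) + posConvolution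
      (fun t : ℝ => Complex.exp (-(s * t : ℝ)) * (((t ^ (β - 1) : ℝ) : ℂ) *
      mittagLeffler β β (-lam * ((t ^ β : ℝ) : ℂ))))
      (fun t : ℝ => Complex.exp (-(s * t : ℝ)) * φ t) (ContinuousLinearMap.mul ℝ ℂ) volume t) := by
    refine setIntegral_congr_fun measurableSet_Ioi fun t ht => ?_
    have e1 : t ^ ((1:ℝ) - 1) = 1 := by norm_num
    have e2 : t ^ ((2:ℝ) - 1) = t := by norm_num
    simp only [posConvolution, Set.indicator_of_mem ht, hu, e1, e2]
    rw [mul_add, mul_add, ← intervalIntegral.integral_const_mul]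
    congr 1
    · push_cast
      ring
    · refine intervalIntegral.integral_congr fun ξ _ => ?_
      have e3 : Complex.exp (-(s * t : ℝ)) =
          Complex.exp (-(s * ξ : ℝ)) * Complex.exp (-(s * (t - ξ) : ℝ)) := by
        rw [← Complex.exp_add]
        congr 1
        push_cast
        ring
      simp only [ContinuousLinearMap.mul_apply']
      rw [e3]
      ring
  refine key.trans ((integral_add ((i1.const_mul c₁).add (i2.const_mul c₂)) ic').trans ?_)
  simp only [Pi.add_apply]
  rw [integral_add (i1.const_mul c₁) (i2.const_mul c₂), integral_const_mul, integral_const_mul,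
    v1, v2, hpc]
  simp only [ContinuousLinearMap.mul_apply', sub_self, Real.rpow_zero]
  push_cast
  ring
end
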